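/- Let n ≥ 1, let 1 ≤ p, q ≤ ∞, s > 0, α > 0, and choose 1 ≤ p₁, p₂, q₁, q₂ ≤ ∞ with 1/p = 1/p₁ + 1/p₂ and 1/q = 1/q₁ + 1/q₂. Then there exists a constant C > 0, depending only on n, s, α and these indices, such that for all Schwartz functions f₁, f₂ on ℝⁿ the para-product series T_{f₂} f₁ = Σ_{k∈ℤ} (Δ_k f₁)(S_{k−1} f₂) converges in the space of tempered distributions and satisfies ‖Σ_{k∈ℤ} (Δ_k f₁)(S_{k−1} f₂)‖_{Ḃ^s_{p,q}} ≤ C ‖f₁‖_{Ḃ^{s+α}_{p₁,q₁}} ‖f₂‖_{Ḃ^{-α}_{p₂,q₂}} in [0,∞]. -/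

import Mathlib

/-!
The product `Δ_k f₁ · S_{k-1} f₂` has its Fourier transform supported in an annulus of radius
comparable to `2^k`, because the gap between `3/4 · 2^k` and `4/3 · 2^(k-1)` keeps the sum of the
frequencies of the two factors away from zero. Hence `Δ_j` sees only the terms with
`-2 ≤ k - j ≤ 4`, and Hölder's inequality in `x` bounds the `L^p` norm of `Δ_j (T_{f₂} f₁)` by
finitely many products `‖Δ_k f₁‖_{p₁} ‖S_{k-1} f₂‖_{p₂}`.

The low frequencies are controlled by the blocks below them: `S_{k-1} f₂ = ∑_{l ≥ 0} Δ_{k-2-l} f₂`,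
so `2^(-kα) ‖S_{k-1} f₂‖_{p₂}` is at most the convolution of the sequence `2^(-jα) ‖Δ_j f₂‖_{p₂}`
with the geometric weights `2^(-(l+2)α)`, which are summable exactly because `α > 0`. Young's
inequality on `ℤ` and Hölder's inequality in `ℓ^q` conclude.
-/

open MeasureTheory Real Complex Filter Function
open scoped ENNReal FourierTransform SchwartzMap

noncomputable section

/-- The properties of the radial smooth cutoff `χ` used to build the
Littlewood–Paley decomposition: smooth, compactly supported, radial,
`0 ≤ χ ≤ 1`, `χ = 1` on `{‖ξ‖ ≤ 3/4}` and `χ = 0` on `{‖ξ‖ > 4/3}`. -/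
def IsLPCutoff {n : ℕ} (χ : EuclideanSpace ℝ (Fin n) → ℝ) : Prop :=
  ContDiff ℝ ((⊤ : ℕ∞) : WithTop ℕ∞) χ ∧ HasCompactSupport χ ∧
    (∀ ξ η, ‖ξ‖ = ‖η‖ → χ ξ = χ η) ∧ (∀ ξ, 0 ≤ χ ξ) ∧ (∀ ξ, χ ξ ≤ 1) ∧
    (∀ ξ, ‖ξ‖ ≤ 3 / 4 → χ ξ = 1) ∧ (∀ ξ, 4 / 3 < ‖ξ‖ → χ ξ = 0)

/-- The low-frequency Littlewood–Paley projection `S_j f = 𝓕⁻¹(χ(·/2^j) 𝓕 f)`. -/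
def Sproj {n : ℕ} (χ : EuclideanSpace ℝ (Fin n) → ℝ) (j : ℤ)
    (f : EuclideanSpace ℝ (Fin n) → ℂ) : EuclideanSpace ℝ (Fin n) → ℂ :=
  𝓕⁻ fun ξ => ((χ ((2 : ℝ) ^ (-j) • ξ) : ℝ) : ℂ) * 𝓕 f ξ

/-- The Littlewood–Paley block `Δ_j f = 𝓕⁻¹(φ̂(·/2^j) 𝓕 f)`, where
`φ̂(ξ) = χ(ξ/2) - χ(ξ)`, i.e. `φ̂(ξ/2^j) = χ(ξ/2^(j+1)) - χ(ξ/2^j)`. -/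
def Dproj {n : ℕ} (χ : EuclideanSpace ℝ (Fin n) → ℝ) (j : ℤ)
    (f : EuclideanSpace ℝ (Fin n) → ℂ) : EuclideanSpace ℝ (Fin n) → ℂ :=
  𝓕⁻ fun ξ => ((χ ((2 : ℝ) ^ (-(j + 1)) • ξ) - χ ((2 : ℝ) ^ (-j) • ξ) : ℝ) : ℂ) * 𝓕 f ξ

/-- The `ℓ^q(ℤ)` norm of a sequence of extended nonnegative reals, with the usual
supremum modification for `q = ∞`. -/
def lqNorm (q : ℝ≥0∞) (a : ℤ → ℝ≥0∞) : ℝ≥0∞ :=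
  if q = ∞ then ⨆ j, a j else (∑' j, a j ^ q.toReal) ^ (1 / q.toReal)

/-- The homogeneous Besov norm `‖f‖_{Ḃ^s_{p,q}}`, valued in `[0,∞]`. -/
def besovNorm {n : ℕ} (χ : EuclideanSpace ℝ (Fin n) → ℝ) (s : ℝ) (p q : ℝ≥0∞)
    (f : EuclideanSpace ℝ (Fin n) → ℂ) : ℝ≥0∞ :=
  lqNorm q fun j => (2 : ℝ≥0∞) ^ ((j : ℝ) * s) * eLpNorm (Dproj χ j f) p volume

section MixedNorms

variable {α β : Type*} [MeasurableSpace α] [MeasurableSpace β] {μ : Measure α} {ν : Measure β}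

lemma rpow_one_sub_mul_rpow_le (x : ℝ≥0∞) {r : ℝ} (hr : 1 ≤ r) : x ^ (1 - r) * x ^ r ≤ x := by
  rcases eq_or_ne x 0 with rfl | hx0
  · simp [zero_lt_one.trans_le hr]
  rcases eq_or_ne x ∞ with rfl | hx_top
  · exact le_top
  rw [← ENNReal.rpow_add _ _ hx0 hx_top, sub_add_cancel, ENNReal.rpow_one]

/- Hölder with exponents `r / (r - 1)` and `r` for the factorisation
`f = G ^ (1 - 1 / r) * (f ^ r * G ^ (1 - r)) ^ (1 / r)`. -/
lemma lintegral_rpow_le_mul_lintegral_rpow_mul {f G : β → ℝ≥0∞} (hf : AEMeasurable f ν)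
    (hG : AEMeasurable G ν) (hG_top : ∀ᵐ y ∂ν, G y ≠ ∞) (hfG : ∀ᵐ y ∂ν, G y = 0 → f y = 0)
    {r : ℝ} (hr : 1 ≤ r) :
    (∫⁻ y, f y ∂ν) ^ r ≤ (∫⁻ y, G y ∂ν) ^ (r - 1) * ∫⁻ y, f y ^ r * G y ^ (1 - r) ∂ν := by
  have hr0 : 0 < r := zero_lt_one.trans_le hr
  have hfactor : ∀ᵐ y ∂ν, f y ≤ G y ^ (1 - 1 / r) * (f y ^ r * G y ^ (1 - r)) ^ (1 / r) := by
    filter_upwards [hG_top, hfG] with y hy_top hy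
    rcases eq_or_ne (G y) 0 with h0 | h0
    · simp [hy h0]
    · rw [ENNReal.mul_rpow_of_nonneg _ _ (by positivity), ← ENNReal.rpow_mul, ← ENNReal.rpow_mul,
        mul_one_div_cancel hr0.ne', ENNReal.rpow_one, mul_left_comm,
        ← ENNReal.rpow_add _ _ h0 hy_top]
      rw [show 1 - 1 / r + (1 - r) * (1 / r) = 0 by field_simp; ring, ENNReal.rpow_zero, mul_one]
  have hHolder := ENNReal.lintegral_mul_norm_pow_le hG ((hf.pow_const r).mul (hG.pow_const (1 - r)))
    (sub_nonneg.2 ((div_le_one hr0).2 hr)) (by positivity : 0 ≤ 1 / r) (sub_add_cancel 1 (1 / r))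
  calc (∫⁻ y, f y ∂ν) ^ r
      ≤ ((∫⁻ y, G y ∂ν) ^ (1 - 1 / r) * (∫⁻ y, f y ^ r * G y ^ (1 - r) ∂ν) ^ (1 / r)) ^ r :=
        ENNReal.rpow_le_rpow ((lintegral_mono_ae hfactor).trans hHolder) hr0.le
    _ = (∫⁻ y, G y ∂ν) ^ (r - 1) * ∫⁻ y, f y ^ r * G y ^ (1 - r) ∂ν := by
        rw [ENNReal.mul_rpow_of_nonneg _ _ hr0.le, ← ENNReal.rpow_mul, ← ENNReal.rpow_mul,
          one_div_mul_cancel hr0.ne', ENNReal.rpow_one, sub_mul, one_mul,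
          one_div_mul_cancel hr0.ne']

variable [SFinite μ] [SFinite ν] {F : α → β → ℝ≥0∞} {G : β → ℝ≥0∞}

lemma eLpNorm_top_lintegral_le (hF : Measurable (uncurry F)) (hG : Measurable G)
    (hFG : ∀ y, eLpNorm (fun x => F x y) ∞ μ ≤ G y) :
    eLpNorm (fun x => ∫⁻ y, F x y ∂ν) ∞ μ ≤ ∫⁻ y, G y ∂ν := by
  have hle : ∀ᵐ x ∂μ, ∀ᵐ y ∂ν, F x y ≤ G y :=
    (Measure.ae_ae_comm (p := fun x y => F x y ≤ G y)
      (measurableSet_le hF (hG.comp measurable_snd))).2 <|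
      ae_of_all _ fun y => ae_le_eLpNormEssSup.mono fun x hx => hx.trans (hFG y)
  refine eLpNormEssSup_le_of_ae_enorm_bound (hle.mono fun x hx => ?_)
  exact lintegral_mono_ae hx

lemma lintegral_lintegral_rpow_le (hF : Measurable (uncurry F)) (hG : Measurable G) {r : ℝ}
    (hr : 1 ≤ r) (hFG : ∀ y, ∫⁻ x, F x y ^ r ∂μ ≤ G y ^ r) :
    ∫⁻ x, (∫⁻ y, F x y ∂ν) ^ r ∂μ ≤ (∫⁻ y, G y ∂ν) ^ r := by
  have hr0 : 0 < r := zero_lt_one.trans_le hr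
  rcases eq_or_ne (∫⁻ y, G y ∂ν) ∞ with hI | hI
  · simp [hI, hr0]
  have hG_top : ∀ᵐ y ∂ν, G y ≠ ∞ := (ae_lt_top hG hI).mono fun y hy => hy.ne
  have hFr (y : β) : Measurable fun x => F x y ^ r := hF.of_uncurry_right.pow_const r
  have hzero : ∀ᵐ x ∂μ, ∀ᵐ y ∂ν, G y = 0 → F x y = 0 := by
    refine (Measure.ae_ae_comm (p := fun x y => G y = 0 → F x y = 0) (.imp
      (measurableSet_eq_fun (hG.comp measurable_snd) measurable_const)
      (measurableSet_eq_fun hF measurable_const))).2 (ae_of_all _ fun y => ?_)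
    by_cases hy : G y = 0
    · have h0 : ∫⁻ x, F x y ^ r ∂μ = 0 := by simpa [hy, hr0] using hFG y
      filter_upwards [(lintegral_eq_zero_iff (hFr y)).1 h0] with x hx _
      simpa [hr0, hr0.not_gt] using hx
    · simp [hy]
  calc ∫⁻ x, (∫⁻ y, F x y ∂ν) ^ r ∂μ
      ≤ ∫⁻ x, (∫⁻ y, G y ∂ν) ^ (r - 1) * ∫⁻ y, F x y ^ r * G y ^ (1 - r) ∂ν ∂μ :=
        lintegral_mono_ae <| hzero.mono fun x hx => lintegral_rpow_le_mul_lintegral_rpow_mul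
          hF.of_uncurry_left.aemeasurable hG.aemeasurable hG_top hx hr
    _ = (∫⁻ y, G y ∂ν) ^ (r - 1) * ∫⁻ y, G y ^ (1 - r) * ∫⁻ x, F x y ^ r ∂μ ∂ν := by
        rw [lintegral_const_mul' _ _ (ENNReal.rpow_ne_top_of_nonneg (by linarith) hI),
          lintegral_lintegral_swap (by fun_prop)]
        simp_rw [lintegral_mul_const _ (hFr _), mul_comm]
    _ ≤ (∫⁻ y, G y ∂ν) ^ (r - 1) * ∫⁻ y, G y ∂ν := by
        gcongr with y
        exact (mul_le_mul_right (hFG y) _).trans (rpow_one_sub_mul_rpow_le _ hr)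
    _ = (∫⁻ y, G y ∂ν) ^ r := by
        nth_rw 2 [← ENNReal.rpow_one (∫⁻ y, G y ∂ν)]
        rw [← ENNReal.rpow_add_of_nonneg _ _ (by linarith) zero_le_one, sub_add_cancel]

theorem eLpNorm_lintegral_le {p : ℝ≥0∞} (hp : 1 ≤ p) (hF : Measurable (uncurry F))
    (hG : Measurable G) (hFG : ∀ y, eLpNorm (fun x => F x y) p μ ≤ G y) :
    eLpNorm (fun x => ∫⁻ y, F x y ∂ν) p μ ≤ ∫⁻ y, G y ∂ν := by
  rcases eq_or_ne p ∞ with rfl | hp_top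
  · exact eLpNorm_top_lintegral_le hF hG hFG
  have hp0 : p ≠ 0 := (zero_lt_one.trans_le hp).ne'
  have hr : 1 ≤ p.toReal := by simpa using ENNReal.toReal_mono hp_top hp
  have hr0 : 0 < p.toReal := zero_lt_one.trans_le hr
  simp only [eLpNorm_eq_lintegral_rpow_enorm_toReal hp0 hp_top, one_div, enorm_eq_self,
    ENNReal.rpow_inv_le_iff hr0] at hFG ⊢
  exact lintegral_lintegral_rpow_le hF hG hr hFG

end MixedNorms

section Translates

variable {β E : Type*} [MeasurableSpace β] {ν : Measure β} [SFinite ν] [AddGroup E]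
  [MeasurableSpace E] [MeasurableAdd₂ E] {μ : Measure E} [SFinite μ] [μ.IsAddRightInvariant]

lemma eLpNorm_lintegral_mul_comp_add_le {p : ℝ≥0∞} (hp : 1 ≤ p) {w : β → ℝ≥0∞} {σ : β → E}
    {g : E → ℝ≥0∞} (hw : Measurable w) (hσ : Measurable σ) (hg : Measurable g) :
    eLpNorm (fun x => ∫⁻ y, w y * g (x + σ y) ∂ν) p μ ≤ (∫⁻ y, w y ∂ν) * eLpNorm g p μ := by
  rw [← lintegral_mul_const _ hw]
  refine eLpNorm_lintegral_le hp (by fun_prop) (by fun_prop) fun y => ?_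
  have hpres : MeasurePreserving (· + σ y) μ μ := measurePreserving_add_right μ (σ y)
  calc eLpNorm (fun x => w y * g (x + σ y)) p μ
      ≤ w y * eLpNorm (g ∘ (· + σ y)) p μ :=
        eLpNorm_le_mul_eLpNorm_of_ae_le_mul'' p
          (hg.comp hpres.measurable).aestronglyMeasurable (ae_of_all _ fun x => le_rfl)
    _ = w y * eLpNorm g p μ := by
        rw [eLpNorm_comp_measurePreserving hg.aestronglyMeasurable hpres]

lemma eLpNorm_count_tsum_mul_comp_add_le {ι : Type*} [Countable ι] {q : ℝ≥0∞} (hq : 1 ≤ q)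
    (w : ι → ℝ≥0∞) (σ : ι → ℤ) (c : ℤ → ℝ≥0∞) :
    eLpNorm (fun j => ∑' i, w i * c (j + σ i)) q .count ≤ (∑' i, w i) * eLpNorm c q .count := by
  let : MeasurableSpace ι := ⊤
  simpa only [lintegral_count] using eLpNorm_lintegral_mul_comp_add_le (ν := .count) hq
    (measurable_from_top (f := w)) (measurable_from_top (f := σ)) (measurable_from_top (f := c))

end Translates

open scoped Convolution in
lemma eLpNorm_convolution_le {𝕜 E F₁ F₂ F₃ : Type*} [NontriviallyNormedField 𝕜]
    [NormedAddCommGroup F₁] [NormedSpace 𝕜 F₁] [NormedAddCommGroup F₂] [NormedSpace 𝕜 F₂]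
    [NormedAddCommGroup F₃] [NormedSpace 𝕜 F₃] [NormedSpace ℝ F₃]
    [AddGroup E] [MeasurableSpace E] [MeasurableAdd₂ E] [MeasurableNeg E] {μ : Measure E}
    [SFinite μ] [μ.IsAddRightInvariant] (L : F₁ →L[𝕜] F₂ →L[𝕜] F₃) {p : ℝ≥0∞} (hp : 1 ≤ p)
    {K : E → F₁} {g : E → F₂} (hK : StronglyMeasurable K) (hg : StronglyMeasurable g) :
    eLpNorm (K ⋆[L, μ] g) p μ ≤ ‖L‖ₑ * eLpNorm K 1 μ * eLpNorm g p μ := by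
  have hpointwise (x : E) :
      ‖(K ⋆[L, μ] g) x‖ₑ ≤ ∫⁻ y, ‖L‖ₑ * ‖K y‖ₑ * ‖g (x + -y)‖ₑ ∂μ :=
    (enorm_integral_le_lintegral_enorm _).trans <| lintegral_mono fun y => by
      rw [← sub_eq_add_neg]
      exact ((L (K y)).le_opENorm _).trans (mul_le_mul_left (L.le_opENorm _) _)
  rw [eLpNorm_one_eq_lintegral_enorm, ← lintegral_const_mul _ hK.enorm, ← eLpNorm_enorm g]
  exact (eLpNorm_mono_enorm hpointwise).trans <|
    eLpNorm_lintegral_mul_comp_add_le hp (hK.enorm.const_mul _) measurable_neg hg.enorm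

lemma eLpNorm_mul_le {α : Type*} [MeasurableSpace α] {μ : Measure α} {f g : α → ℝ≥0∞}
    (hf : AEMeasurable f μ) (hg : AEMeasurable g μ) (p q r : ℝ≥0∞) [ENNReal.HolderTriple p q r] :
    eLpNorm (fun x => f x * g x) r μ ≤ eLpNorm f p μ * eLpNorm g q μ := by
  rcases ENNReal.trichotomy p with rfl | rfl | hp
  · obtain rfl : r = 0 := le_zero_iff.1 (ENNReal.HolderTriple.le 0 q r)
    simp
  · obtain rfl : r = q := ENNReal.HolderTriple.unique ∞ q r q
    exact eLpNorm_le_mul_eLpNorm_of_ae_le_mul'' r hg.aestronglyMeasurable <|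
      ae_le_eLpNormEssSup.mono fun x hx => mul_le_mul_left hx (g x)
  rcases ENNReal.trichotomy q with rfl | rfl | hq
  · obtain rfl : r = 0 := ENNReal.HolderTriple.unique p 0 r 0
    simp
  · obtain rfl : r = p := ENNReal.HolderTriple.unique p ∞ r p
    simp only [mul_comm (f _), mul_comm (eLpNorm f r μ)]
    exact eLpNorm_le_mul_eLpNorm_of_ae_le_mul'' r hf.aestronglyMeasurable <|
      ae_le_eLpNormEssSup.mono fun x hx => mul_le_mul_left hx (f x)
  have hpqr := ENNReal.HolderTriple.toReal r hp hq
  have hr : 0 < r.toReal := hpqr.pos'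
  rw [ENNReal.toReal_pos_iff] at hp hq
  have hr' := ENNReal.toReal_pos_iff.1 hr
  rw [eLpNorm_eq_lintegral_rpow_enorm_toReal hr'.1.ne' hr'.2.ne,
    eLpNorm_eq_lintegral_rpow_enorm_toReal hp.1.ne' hp.2.ne,
    eLpNorm_eq_lintegral_rpow_enorm_toReal hq.1.ne' hq.2.ne]
  exact ENNReal.lintegral_Lp_mul_le_Lq_mul_Lr hr hpqr.lt hpqr.one_div_eq μ hf hg

lemma lqNorm_eq_eLpNorm_count {q : ℝ≥0∞} (hq : q ≠ 0) (a : ℤ → ℝ≥0∞) :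
    lqNorm q a = eLpNorm a q .count := by
  rw [lqNorm]
  split_ifs with hq_top
  · simp [hq_top, eLpNormEssSup_count]
  · simp [eLpNorm_eq_lintegral_rpow_enorm_toReal hq hq_top, lintegral_count]

section Dilations

variable {V : Type*} [NormedAddCommGroup V] [NormedSpace ℝ V] [FiniteDimensional ℝ V]
  [MeasurableSpace V] [BorelSpace V]

lemma lintegral_comp_smul (μ : Measure V) [μ.IsAddHaarMeasure] (h : V → ℝ≥0∞) {c : ℝ}
    (hc : c ≠ 0) :
    ∫⁻ x, h (c • x) ∂μ = ENNReal.ofReal |(c ^ Module.finrank ℝ V)⁻¹| * ∫⁻ x, h x ∂μ := by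
  have hemb : MeasurableEmbedding (c • · : V → V) :=
    (Homeomorph.smulOfNeZero c hc).measurableEmbedding
  rw [← hemb.lintegral_map h, Measure.map_addHaar_smul μ hc, lintegral_smul_measure, smul_eq_mul]

end Dilations

section FourierIntegrals

variable {V F : Type*} [NormedAddCommGroup V] [InnerProductSpace ℝ V] [FiniteDimensional ℝ V]
  [MeasurableSpace V] [BorelSpace V] [NormedAddCommGroup F] [NormedSpace ℂ F]

lemma enorm_fourierInv_le (h : V → F) (x : V) : ‖𝓕⁻ h x‖ₑ ≤ ∫⁻ ξ, ‖h ξ‖ₑ := by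
  rw [Real.fourierInv_eq]
  simpa only [← ofReal_norm, Circle.norm_smul] using
    enorm_integral_le_lintegral_enorm (μ := volume) fun ξ => 𝐞 (inner ℝ ξ x) • h ξ

lemma fourierInv_comp_smul (h : V → F) {c : ℝ} (hc : c ≠ 0) (x : V) :
    𝓕⁻ (fun ξ => h (c • ξ)) x = |(c ^ Module.finrank ℝ V)⁻¹| • 𝓕⁻ h (c⁻¹ • x) := by
  rw [Real.fourierInv_eq, Real.fourierInv_eq, ← Measure.integral_comp_smul volume
    (fun ξ => 𝐞 (inner ℝ ξ (c⁻¹ • x)) • h ξ) c]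
  simp [inner_smul_left, inner_smul_right, hc]

lemma eLpNorm_one_fourierInv_comp_smul (h : V → F) {c : ℝ} (hc : c ≠ 0) :
    eLpNorm (𝓕⁻ fun ξ => h (c • ξ)) 1 volume = eLpNorm (𝓕⁻ h) 1 volume := by
  have hpos : 0 < |c ^ Module.finrank ℝ V| := abs_pos.2 (pow_ne_zero _ hc)
  simp only [eLpNorm_one_eq_lintegral_enorm, fourierInv_comp_smul h hc, enorm_smul]
  rw [lintegral_const_mul' _ _ enorm_ne_top,
    lintegral_comp_smul volume (fun x => ‖𝓕⁻ h x‖ₑ) (inv_ne_zero hc), ← mul_assoc,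
    Real.enorm_eq_ofReal_abs, abs_abs, inv_pow, inv_inv, ← ENNReal.ofReal_mul (abs_nonneg _),
    abs_inv, inv_mul_cancel₀ hpos.ne', ENNReal.ofReal_one, one_mul]

lemma tendsto_fourierInv_comp_smul_smul [Nontrivial V] {ι : Type*} {l : Filter ι}
    [l.IsCountablyGenerated] {m : V → ℂ} (hm : Continuous m) (hm_supp : HasCompactSupport m)
    {h : V → F} (hh : Integrable h) {c : ι → ℝ} (hc : Tendsto c l (Bornology.cobounded ℝ)) (x : V) :
    Tendsto (fun i => 𝓕⁻ (fun ξ => m (c i • ξ) • h ξ) x) l (nhds 0) := by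
  obtain ⟨M, hM⟩ := hm.bounded_above_of_compact_support hm_supp
  have hlim : ∀ᵐ ξ : V, Tendsto (fun i => 𝐞 (inner ℝ ξ x) • m (c i • ξ) • h ξ) l (nhds 0) := by
    filter_upwards [Measure.ae_ne volume 0] with ξ hξ
    have hscale : Tendsto (fun i => c i • ξ) l (Filter.cocompact V) := by
      rw [← Metric.cobounded_eq_cocompact, ← tendsto_norm_atTop_iff_cobounded]
      simpa only [norm_smul, comp_def] using
        (tendsto_norm_cobounded_atTop.comp hc).atTop_mul_const (norm_pos_iff.2 hξ)
    refine tendsto_const_nhds.congr' ?_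
    filter_upwards [hscale hm_supp.compl_mem_cocompact] with i hi
    rw [image_eq_zero_of_notMem_tsupport hi, zero_smul, smul_zero]
  simp only [Real.fourierInv_eq]
  rw [← integral_zero V F (μ := volume)]
  refine tendsto_integral_filter_of_dominated_convergence (fun ξ => M * ‖h ξ‖)
    (.of_forall fun i => ?_) (.of_forall fun i => ae_of_all _ fun ξ => ?_) (hh.norm.const_mul M)
    hlim
  · exact AEStronglyMeasurable.smul (by fun_prop) <|
      AEStronglyMeasurable.smul (by fun_prop) hh.aestronglyMeasurable
  · rw [Circle.norm_smul, norm_smul]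
    gcongr
    exact hM _

lemma fourier_tsum {ι : Type*} [Countable ι] {u : ι → V → F}
    (hu : ∀ i, AEStronglyMeasurable (u i)) (hsum : ∑' i, ∫⁻ x, ‖u i x‖ₑ ≠ ∞) (ξ : V) :
    𝓕 (fun x => ∑' i, u i x) ξ = ∑' i, 𝓕 (u i) ξ := by
  simp only [Real.fourier_eq, ← tsum_const_smul']
  refine integral_tsum (fun i => ?_) ?_
  · exact AEStronglyMeasurable.smul (by fun_prop) (hu i)
  · simpa only [← ofReal_norm, Circle.norm_smul] using hsum

end FourierIntegrals

section SchwartzMultipliers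

open SchwartzMap hiding convolution
open scoped Convolution Pointwise

variable {V F : Type*} [NormedAddCommGroup V] [InnerProductSpace ℝ V] [FiniteDimensional ℝ V]
  [MeasurableSpace V] [BorelSpace V] [NormedAddCommGroup F] [NormedSpace ℂ F]

lemma coe_fourierMultiplierCLM {m : V → ℂ} (hm : m.HasTemperateGrowth) (f : 𝓢(V, F)) :
    ⇑(fourierMultiplierCLM F m f) = 𝓕⁻ fun ξ => m ξ • 𝓕 (f : V → F) ξ := by
  rw [fourierMultiplierCLM_apply, fourierInv_coe, smulLeftCLM_apply hm, fourier_coe]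

lemma fourierMultiplierCLM_eq_convolution [CompleteSpace F] (m : 𝓢(V, ℂ)) (f : 𝓢(V, F)) :
    ⇑(fourierMultiplierCLM F m f) =
      (𝓕⁻ m : 𝓢(V, ℂ)) ⋆[ContinuousLinearMap.lsmul ℂ ℂ] (f : V → F) := by
  have hconv : fourierMultiplierCLM F m f =
      SchwartzMap.convolution (ContinuousLinearMap.lsmul ℂ ℂ) (𝓕⁻ m) f := by
    rw [← FourierTransform.fourierInv_fourier_eq (F := 𝓢(V, F)) (SchwartzMap.convolution _ _ _),
      fourier_convolution, FourierTransform.fourier_fourierInv_eq, fourierMultiplierCLM_apply]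
    congr 1
    ext ξ
    rw [smulLeftCLM_apply_apply m.hasTemperateGrowth, pairing_apply_apply,
      ContinuousLinearMap.lsmul_apply]
  rw [hconv]
  exact funext (convolution_apply _ _ f)

lemma eLpNorm_fourierMultiplierCLM_le [CompleteSpace F] (m : 𝓢(V, ℂ)) {p : ℝ≥0∞} (hp : 1 ≤ p)
    (f : 𝓢(V, F)) :
    eLpNorm (fourierMultiplierCLM F m f) p volume ≤
      eLpNorm (𝓕⁻ (m : V → ℂ)) 1 volume * eLpNorm f p volume := by
  have hnorm : ‖ContinuousLinearMap.lsmul ℂ ℂ (E := F)‖ₑ ≤ 1 := by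
    rw [← ofReal_norm]
    exact ENNReal.ofReal_le_one.2 ContinuousLinearMap.opNorm_lsmul_le
  rw [fourierMultiplierCLM_eq_convolution, ← fourierInv_coe]
  refine (eLpNorm_convolution_le _ hp (SchwartzMap.continuous _).stronglyMeasurable
    f.continuous.stronglyMeasurable).trans ?_
  rw [mul_assoc]
  exact mul_le_of_le_one_left' hnorm

lemma eLpNorm_fourierMultiplierCLM_comp_smul_le [CompleteSpace F] (m : 𝓢(V, ℂ)) {c : ℝ}
    (hc : c ≠ 0) {p : ℝ≥0∞} (hp : 1 ≤ p) (f : 𝓢(V, F)) :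
    eLpNorm (fourierMultiplierCLM F (fun ξ => m (c • ξ)) f) p volume ≤
      eLpNorm (𝓕⁻ (m : V → ℂ)) 1 volume * eLpNorm f p volume := by
  rw [← eLpNorm_one_fourierInv_comp_smul m hc]
  exact eLpNorm_fourierMultiplierCLM_le
    (compCLMOfContinuousLinearEquiv ℂ (.smulLeft (Units.mk0 c hc)) m) hp f

variable {F₁ F₂ F₃ : Type*} [NormedAddCommGroup F₁] [NormedSpace ℂ F₁] [CompleteSpace F₁]
  [NormedAddCommGroup F₂] [NormedSpace ℂ F₂] [CompleteSpace F₂]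
  [NormedAddCommGroup F₃] [NormedSpace ℂ F₃] [CompleteSpace F₃]

lemma fourier_pairing_eq_convolution (B : F₁ →L[ℂ] F₂ →L[ℂ] F₃) (f : 𝓢(V, F₁)) (g : 𝓢(V, F₂)) :
    𝓕 (pairing B f g) = SchwartzMap.convolution B (𝓕 f) (𝓕 g) := by
  rw [← FourierTransform.fourier_fourierInv_eq (E := 𝓢(V, F₃)) (F := 𝓢(V, F₃))
    (SchwartzMap.convolution _ _ _)]
  congr 1
  ext x
  have h := DFunLike.congr_fun (fourier_convolution B (𝓕 f) (𝓕 g)) (-x)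
  simp only [pairing_apply_apply, fourier_coe, ← Real.fourierInv_eq_fourier_neg] at h
  rw [fourierInv_coe, h, ← fourier_coe, ← fourier_coe, ← fourierInv_coe, ← fourierInv_coe,
    FourierTransform.fourierInv_fourier_eq, FourierTransform.fourierInv_fourier_eq,
    pairing_apply_apply]

lemma support_fourier_pairing_subset (B : F₁ →L[ℂ] F₂ →L[ℂ] F₃) (f : 𝓢(V, F₁)) (g : 𝓢(V, F₂)) :
    support (𝓕 ⇑(pairing B f g)) ⊆ support (𝓕 ⇑f) + support (𝓕 ⇑g) := by
  simp only [← fourier_coe]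
  rw [fourier_pairing_eq_convolution, funext (convolution_apply B _ _)]
  exact support_convolution_subset B

end SchwartzMultipliers

lemma lt_add_of_mul_zpow_lt {𝕜 : Type*} [Field 𝕜] [LinearOrder 𝕜] [IsStrictOrderedRing 𝕜]
    {b c d : 𝕜} (hb : 1 < b) (hc : 0 < c) {i j m : ℤ} (hd : d ≤ c * b ^ m)
    (h : c * b ^ i < d * b ^ j) : i < j + m := by
  have hb_pos : 0 < b := zero_lt_one.trans hb
  rw [← zpow_lt_zpow_iff_right₀ hb, ← mul_lt_mul_iff_right₀ hc]
  calc c * b ^ i < d * b ^ j := h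
    _ ≤ c * b ^ m * b ^ j := by gcongr
    _ = c * b ^ (j + m) := by rw [mul_assoc, ← zpow_add₀ hb_pos.ne', add_comm m]

lemma tsum_rpow_neg_add_mul_lt_top {b : ℝ≥0∞} (hb : 1 < b) (hb_top : b ≠ ∞) {α : ℝ} (hα : 0 < α)
    (c : ℝ) : ∑' l : ℕ, b ^ (-(l + c) * α) < ∞ := by
  have hb_zero : b ≠ 0 := (zero_lt_one.trans hb).ne'
  have hgeom (l : ℕ) : b ^ (-(l + c) * α) = b ^ (-c * α) * (b ^ (-α)) ^ l := by
    rw [← ENNReal.rpow_natCast, ← ENNReal.rpow_mul, ← ENNReal.rpow_add _ _ hb_zero hb_top]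
    congr 1
    ring
  have hratio : b ^ (-α) < 1 := ENNReal.rpow_lt_one_of_one_lt_of_neg hb (neg_lt_zero.2 hα)
  simp only [hgeom]
  rw [ENNReal.tsum_mul_left, ENNReal.tsum_geometric]
  exact ENNReal.mul_lt_top (ENNReal.rpow_ne_top_of_ne_zero hb_zero hb_top).lt_top
    (ENNReal.inv_lt_top.2 (tsub_pos_of_lt hratio))

section LittlewoodPaley

open SchwartzMap hiding convolution

variable {n : ℕ} {χ : EuclideanSpace ℝ (Fin n) → ℝ}

/-- The complex-valued symbol `χ(ξ/2^j)` of the low-frequency projection `S_j`. -/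
def lowSymbol (χ : EuclideanSpace ℝ (Fin n) → ℝ) (j : ℤ) (ξ : EuclideanSpace ℝ (Fin n)) : ℂ :=
  χ ((2 : ℝ) ^ (-j) • ξ)

/-- The complex-valued symbol `φ̂(ξ/2^j)` of the Littlewood–Paley block `Δ_j`. -/
def blockSymbol (χ : EuclideanSpace ℝ (Fin n) → ℝ) (j : ℤ) (ξ : EuclideanSpace ℝ (Fin n)) : ℂ :=
  lowSymbol χ (j + 1) ξ - lowSymbol χ j ξ

lemma lowSymbol_zpow_smul (χ : EuclideanSpace ℝ (Fin n) → ℝ) (i j : ℤ)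
    (ξ : EuclideanSpace ℝ (Fin n)) :
    lowSymbol χ i ((2 : ℝ) ^ (-j) • ξ) = lowSymbol χ (i + j) ξ := by
  rw [lowSymbol, lowSymbol, smul_smul, ← zpow_add₀ two_ne_zero, neg_add]

lemma blockSymbol_zpow_smul (χ : EuclideanSpace ℝ (Fin n) → ℝ) (i j : ℤ)
    (ξ : EuclideanSpace ℝ (Fin n)) :
    blockSymbol χ i ((2 : ℝ) ^ (-j) • ξ) = blockSymbol χ (i + j) ξ := by
  rw [blockSymbol, blockSymbol, lowSymbol_zpow_smul, lowSymbol_zpow_smul, add_right_comm]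

lemma Sproj_eq_fourierInv (χ : EuclideanSpace ℝ (Fin n) → ℝ) (j : ℤ)
    (f : EuclideanSpace ℝ (Fin n) → ℂ) :
    Sproj χ j f = 𝓕⁻ fun ξ => lowSymbol χ j ξ • 𝓕 f ξ := rfl

lemma Dproj_eq_fourierInv (χ : EuclideanSpace ℝ (Fin n) → ℝ) (j : ℤ)
    (f : EuclideanSpace ℝ (Fin n) → ℂ) :
    Dproj χ j f = 𝓕⁻ fun ξ => blockSymbol χ j ξ • 𝓕 f ξ := by
  simp only [Dproj, Complex.ofReal_sub]
  rfl

namespace IsLPCutoff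

lemma contDiff_lowSymbol (hχ : IsLPCutoff χ) (j : ℤ) :
    ContDiff ℝ ((⊤ : ℕ∞) : WithTop ℕ∞) (lowSymbol χ j) :=
  Complex.ofRealCLM.contDiff.comp (hχ.1.comp (contDiff_const_smul _))

lemma hasCompactSupport_lowSymbol (hχ : IsLPCutoff χ) (j : ℤ) :
    HasCompactSupport (lowSymbol χ j) :=
  (hχ.2.1.comp_smul (zpow_ne_zero _ two_ne_zero)).comp_left Complex.ofReal_zero

lemma contDiff_blockSymbol (hχ : IsLPCutoff χ) (j : ℤ) :
    ContDiff ℝ ((⊤ : ℕ∞) : WithTop ℕ∞) (blockSymbol χ j) :=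
  (hχ.contDiff_lowSymbol (j + 1)).sub (hχ.contDiff_lowSymbol j)

lemma hasCompactSupport_blockSymbol (hχ : IsLPCutoff χ) (j : ℤ) :
    HasCompactSupport (blockSymbol χ j) :=
  (hχ.hasCompactSupport_lowSymbol (j + 1)).sub (hχ.hasCompactSupport_lowSymbol j)

lemma enorm_lowSymbol_le_one (hχ : IsLPCutoff χ) (j : ℤ) (ξ : EuclideanSpace ℝ (Fin n)) :
    ‖lowSymbol χ j ξ‖ₑ ≤ 1 := by
  obtain ⟨-, -, -, h0, h1, -⟩ := hχ
  rw [← ofReal_norm, lowSymbol, Complex.norm_real, Real.norm_of_nonneg (h0 _)]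
  exact ENNReal.ofReal_le_one.2 (h1 _)

lemma enorm_blockSymbol_le_one (hχ : IsLPCutoff χ) (j : ℤ) (ξ : EuclideanSpace ℝ (Fin n)) :
    ‖blockSymbol χ j ξ‖ₑ ≤ 1 := by
  obtain ⟨-, -, -, h0, h1, -⟩ := hχ
  rw [← ofReal_norm, blockSymbol, lowSymbol, lowSymbol, ← Complex.ofReal_sub, Complex.norm_real]
  exact ENNReal.ofReal_le_one.2 <| abs_sub_le_of_nonneg_of_le (h0 _) (h1 _) (h0 _) (h1 _)

lemma lowSymbol_eq_one (hχ : IsLPCutoff χ) {j : ℤ} {ξ : EuclideanSpace ℝ (Fin n)}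
    (hξ : ‖ξ‖ ≤ 3 / 4 * 2 ^ j) : lowSymbol χ j ξ = 1 := by
  obtain ⟨-, -, -, -, -, h, -⟩ := hχ
  rw [lowSymbol, h, Complex.ofReal_one]
  rwa [norm_smul, zpow_neg, norm_inv, norm_zpow, Real.norm_two, inv_mul_le_iff₀ (by positivity),
    mul_comm]

lemma norm_le_of_lowSymbol_ne_zero (hχ : IsLPCutoff χ) {j : ℤ} {ξ : EuclideanSpace ℝ (Fin n)}
    (hξ : lowSymbol χ j ξ ≠ 0) : ‖ξ‖ ≤ 4 / 3 * 2 ^ j := by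
  obtain ⟨-, -, -, -, -, -, h⟩ := hχ
  contrapose! hξ
  rw [lowSymbol, h, Complex.ofReal_zero]
  rwa [norm_smul, zpow_neg, norm_inv, norm_zpow, Real.norm_two, lt_inv_mul_iff₀ (by positivity),
    mul_comm]

lemma norm_mem_Ioc_of_blockSymbol_ne_zero (hχ : IsLPCutoff χ) {j : ℤ}
    {ξ : EuclideanSpace ℝ (Fin n)} (hξ : blockSymbol χ j ξ ≠ 0) :
    ‖ξ‖ ∈ Set.Ioc (3 / 4 * 2 ^ j) (8 / 3 * 2 ^ j) := by
  have hj : (0 : ℝ) < 2 ^ j := by positivity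
  have hj1 : (2 : ℝ) ^ (j + 1) = 2 ^ j * 2 := zpow_add_one₀ two_ne_zero j
  constructor
  · contrapose! hξ
    rw [blockSymbol, hχ.lowSymbol_eq_one hξ, hχ.lowSymbol_eq_one (by linarith), sub_self]
  · contrapose! hξ
    have hlow (i : ℤ) (hi : 4 / 3 * 2 ^ i < ‖ξ‖) : lowSymbol χ i ξ = 0 :=
      not_imp_comm.1 hχ.norm_le_of_lowSymbol_ne_zero hi.not_ge
    rw [blockSymbol, hlow _ (by linarith), hlow _ (by linarith), sub_self]

lemma tsum_enorm_blockSymbol_le (hχ : IsLPCutoff χ) (ξ : EuclideanSpace ℝ (Fin n)) :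
    ∑' k : ℤ, ‖blockSymbol χ k ξ‖ₑ ≤ 3 := by
  rcases eq_or_ne ξ 0 with rfl | hξ
  · simp [blockSymbol, lowSymbol]
  obtain ⟨k₀, hlt, hle⟩ := exists_mem_Ioc_zpow (norm_pos_iff.2 hξ) (one_lt_two (α := ℝ))
  rw [zpow_add_one₀ two_ne_zero] at hle
  have hzero : ∀ k ∉ Finset.Icc (k₀ - 1) (k₀ + 1), ‖blockSymbol χ k ξ‖ₑ = 0 := fun k hk => by
    contrapose! hk
    obtain ⟨hk_lt, hk_le⟩ := hχ.norm_mem_Ioc_of_blockSymbol_ne_zero (enorm_ne_zero.1 hk)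
    have hub : k < k₀ + 2 := lt_add_of_mul_zpow_lt (b := (2 : ℝ)) (c := 3 / 4) (d := 2)
      one_lt_two (by norm_num) (by norm_num) (by linarith)
    have hlb : k₀ < k + 2 := lt_add_of_mul_zpow_lt (b := (2 : ℝ)) (c := 1) (d := 8 / 3)
      one_lt_two one_pos (by norm_num) (by linarith)
    exact Finset.mem_Icc.2 ⟨by omega, by omega⟩
  rw [tsum_eq_sum hzero]
  refine (Finset.sum_le_card_nsmul _ _ 1 fun k _ => hχ.enorm_blockSymbol_le_one k ξ).trans_eq ?_
  simp [show k₀ + 1 + 1 - (k₀ - 1) = 3 by ring]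

lemma Sproj_eq_fourierMultiplierCLM (hχ : IsLPCutoff χ) (j : ℤ)
    (f : 𝓢(EuclideanSpace ℝ (Fin n), ℂ)) :
    Sproj χ j f = fourierMultiplierCLM ℂ (lowSymbol χ j) f :=
  (coe_fourierMultiplierCLM
    ((hχ.hasCompactSupport_lowSymbol j).hasTemperateGrowth (hχ.contDiff_lowSymbol j)) f).symm

lemma Dproj_eq_fourierMultiplierCLM (hχ : IsLPCutoff χ) (j : ℤ)
    (f : 𝓢(EuclideanSpace ℝ (Fin n), ℂ)) :
    Dproj χ j f = fourierMultiplierCLM ℂ (blockSymbol χ j) f := by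
  rw [Dproj_eq_fourierInv, coe_fourierMultiplierCLM
    ((hχ.hasCompactSupport_blockSymbol j).hasTemperateGrowth (hχ.contDiff_blockSymbol j))]

lemma continuous_Sproj (hχ : IsLPCutoff χ) (j : ℤ) (f : 𝓢(EuclideanSpace ℝ (Fin n), ℂ)) :
    Continuous (Sproj χ j f) := by
  rw [hχ.Sproj_eq_fourierMultiplierCLM]
  exact SchwartzMap.continuous _

lemma continuous_Dproj (hχ : IsLPCutoff χ) (j : ℤ) (f : 𝓢(EuclideanSpace ℝ (Fin n), ℂ)) :
    Continuous (Dproj χ j f) := by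
  rw [hχ.Dproj_eq_fourierMultiplierCLM]
  exact SchwartzMap.continuous _

lemma support_fourier_Sproj_subset (hχ : IsLPCutoff χ) (j : ℤ)
    (f : 𝓢(EuclideanSpace ℝ (Fin n), ℂ)) :
    support (𝓕 (Sproj χ j f)) ⊆ {ξ | ‖ξ‖ ≤ 4 / 3 * 2 ^ j} := fun ξ hξ => by
  have hgrowth := (hχ.hasCompactSupport_lowSymbol j).hasTemperateGrowth (hχ.contDiff_lowSymbol j)
  rw [hχ.Sproj_eq_fourierMultiplierCLM, mem_support, ← fourier_coe, fourierMultiplierCLM_apply,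
    FourierTransform.fourier_fourierInv_eq, smulLeftCLM_apply_apply hgrowth] at hξ
  exact hχ.norm_le_of_lowSymbol_ne_zero (left_ne_zero_of_smul hξ)

lemma support_fourier_Dproj_subset (hχ : IsLPCutoff χ) (j : ℤ)
    (f : 𝓢(EuclideanSpace ℝ (Fin n), ℂ)) :
    support (𝓕 (Dproj χ j f)) ⊆ {ξ | ‖ξ‖ ∈ Set.Ioc (3 / 4 * 2 ^ j) (8 / 3 * 2 ^ j)} :=
  fun ξ hξ => by
  have hgrowth :=
    (hχ.hasCompactSupport_blockSymbol j).hasTemperateGrowth (hχ.contDiff_blockSymbol j)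
  rw [hχ.Dproj_eq_fourierMultiplierCLM, mem_support, ← fourier_coe, fourierMultiplierCLM_apply,
    FourierTransform.fourier_fourierInv_eq, smulLeftCLM_apply_apply hgrowth] at hξ
  exact hχ.norm_mem_Ioc_of_blockSymbol_ne_zero (left_ne_zero_of_smul hξ)

lemma Dproj_eq_sub (hχ : IsLPCutoff χ) (j : ℤ) (f : 𝓢(EuclideanSpace ℝ (Fin n), ℂ)) :
    Dproj χ j f = Sproj χ (j + 1) f - Sproj χ j f := by
  have hgrowth (i : ℤ) : (lowSymbol χ i).HasTemperateGrowth :=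
    (hχ.hasCompactSupport_lowSymbol i).hasTemperateGrowth (hχ.contDiff_lowSymbol i)
  rw [hχ.Dproj_eq_fourierMultiplierCLM, hχ.Sproj_eq_fourierMultiplierCLM,
    hχ.Sproj_eq_fourierMultiplierCLM, ← FunLike.coe_sub]
  congr 1
  change fourierMultiplierCLM ℂ (lowSymbol χ (j + 1) - lowSymbol χ j) f = _
  simp only [fourierMultiplierCLM_apply, smulLeftCLM_sub (hgrowth _) (hgrowth _), sub_apply]
  exact map_sub (FourierTransform.fourierInvCLM ℂ 𝓢(EuclideanSpace ℝ (Fin n), ℂ)) _ _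

lemma eLpNorm_fourierInv_lowSymbol_lt_top (hχ : IsLPCutoff χ) (j : ℤ) (p : ℝ≥0∞) :
    eLpNorm (𝓕⁻ (lowSymbol χ j)) p volume < ∞ := by
  have h := (𝓕⁻ ((hχ.hasCompactSupport_lowSymbol j).toSchwartzMap
    (hχ.contDiff_lowSymbol j))).memLp p volume
  rw [fourierInv_coe] at h
  exact h.2

lemma eLpNorm_fourierInv_blockSymbol_lt_top (hχ : IsLPCutoff χ) (j : ℤ) (p : ℝ≥0∞) :
    eLpNorm (𝓕⁻ (blockSymbol χ j)) p volume < ∞ := by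
  have h := (𝓕⁻ ((hχ.hasCompactSupport_blockSymbol j).toSchwartzMap
    (hχ.contDiff_blockSymbol j))).memLp p volume
  rw [fourierInv_coe] at h
  exact h.2

lemma eLpNorm_Sproj_le (hχ : IsLPCutoff χ) {p : ℝ≥0∞} (hp : 1 ≤ p) (j : ℤ)
    (f : 𝓢(EuclideanSpace ℝ (Fin n), ℂ)) :
    eLpNorm (Sproj χ j f) p volume ≤
      eLpNorm (𝓕⁻ (lowSymbol χ 0)) 1 volume * eLpNorm f p volume := by
  have hdilate : lowSymbol χ j = fun ξ => lowSymbol χ 0 ((2 : ℝ) ^ (-j) • ξ) := by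
    simp only [lowSymbol_zpow_smul, zero_add]
  rw [hχ.Sproj_eq_fourierMultiplierCLM, hdilate]
  exact eLpNorm_fourierMultiplierCLM_comp_smul_le ((hχ.hasCompactSupport_lowSymbol 0).toSchwartzMap
    (hχ.contDiff_lowSymbol 0)) (zpow_ne_zero _ two_ne_zero) hp f

lemma eLpNorm_Dproj_le (hχ : IsLPCutoff χ) {p : ℝ≥0∞} (hp : 1 ≤ p) (j : ℤ)
    (f : 𝓢(EuclideanSpace ℝ (Fin n), ℂ)) :
    eLpNorm (Dproj χ j f) p volume ≤
      eLpNorm (𝓕⁻ (blockSymbol χ 0)) 1 volume * eLpNorm f p volume := by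
  have hdilate : blockSymbol χ j = fun ξ => blockSymbol χ 0 ((2 : ℝ) ^ (-j) • ξ) := by
    simp only [blockSymbol_zpow_smul, zero_add]
  rw [hχ.Dproj_eq_fourierMultiplierCLM, hdilate]
  exact eLpNorm_fourierMultiplierCLM_comp_smul_le
    ((hχ.hasCompactSupport_blockSymbol 0).toSchwartzMap (hχ.contDiff_blockSymbol 0))
    (zpow_ne_zero _ two_ne_zero) hp f

lemma enorm_Sproj_le (hχ : IsLPCutoff χ) (j : ℤ) (f : EuclideanSpace ℝ (Fin n) → ℂ)
    (x : EuclideanSpace ℝ (Fin n)) : ‖Sproj χ j f x‖ₑ ≤ ∫⁻ ξ, ‖𝓕 f ξ‖ₑ := by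
  refine (enorm_fourierInv_le _ x).trans (lintegral_mono fun ξ => ?_)
  rw [enorm_mul]
  exact mul_le_of_le_one_left' (hχ.enorm_lowSymbol_le_one j ξ)

lemma tsum_iSup_enorm_Dproj_lt_top (hχ : IsLPCutoff χ) (f : 𝓢(EuclideanSpace ℝ (Fin n), ℂ)) :
    ∑' k : ℤ, ⨆ x, ‖Dproj χ k f x‖ₑ < ∞ := by
  have hf : Measurable fun ξ => ‖𝓕 (f : EuclideanSpace ℝ (Fin n) → ℂ) ξ‖ₑ :=
    (𝓕 f).continuous.enorm.measurable
  have hblock (k : ℤ) : Measurable fun ξ => ‖blockSymbol χ k ξ‖ₑ :=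
    (hχ.contDiff_blockSymbol k).continuous.enorm.measurable
  have hmul (k : ℤ) : AEMeasurable fun ξ =>
      ‖blockSymbol χ k ξ‖ₑ * ‖𝓕 (f : EuclideanSpace ℝ (Fin n) → ℂ) ξ‖ₑ :=
    ((hblock k).mul hf).aemeasurable
  calc ∑' k : ℤ, ⨆ x, ‖Dproj χ k f x‖ₑ
      ≤ ∑' k : ℤ, ∫⁻ ξ, ‖blockSymbol χ k ξ‖ₑ * ‖𝓕 (f : EuclideanSpace ℝ (Fin n) → ℂ) ξ‖ₑ := by
        refine ENNReal.tsum_le_tsum fun k => iSup_le fun x => ?_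
        simpa only [Dproj_eq_fourierInv, smul_eq_mul, enorm_mul] using
          enorm_fourierInv_le (fun ξ => blockSymbol χ k ξ • 𝓕 (f : _ → ℂ) ξ) x
    _ = ∫⁻ ξ, (∑' k : ℤ, ‖blockSymbol χ k ξ‖ₑ) *
          ‖𝓕 (f : EuclideanSpace ℝ (Fin n) → ℂ) ξ‖ₑ := by
        rw [← lintegral_tsum hmul]
        simp only [ENNReal.tsum_mul_right]
    _ ≤ 3 * ∫⁻ ξ, ‖𝓕 (f : EuclideanSpace ℝ (Fin n) → ℂ) ξ‖ₑ := by
        rw [← lintegral_const_mul _ hf]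
        gcongr with ξ
        exact hχ.tsum_enorm_blockSymbol_le ξ
    _ < ∞ := ENNReal.mul_lt_top ENNReal.ofNat_lt_top (𝓕 f).integrable.hasFiniteIntegral

lemma tendsto_Sproj_sub_natCast [NeZero n] (hχ : IsLPCutoff χ) (k : ℤ)
    (f : 𝓢(EuclideanSpace ℝ (Fin n), ℂ)) (x : EuclideanSpace ℝ (Fin n)) :
    Tendsto (fun N : ℕ => Sproj χ (k - N) f x) atTop (nhds 0) := by
  have hscale : Tendsto (fun N : ℕ => (2 : ℝ) ^ N) atTop (Bornology.cobounded ℝ) :=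
    tendsto_norm_atTop_iff_cobounded.1 <| by
      simpa using tendsto_pow_atTop_atTop_of_one_lt (one_lt_two (α := ℝ))
  have h𝓕f : Integrable (𝓕 (f : EuclideanSpace ℝ (Fin n) → ℂ)) := (𝓕 f).integrable
  convert tendsto_fourierInv_comp_smul_smul (hχ.contDiff_lowSymbol k).continuous
    (hχ.hasCompactSupport_lowSymbol k) h𝓕f hscale x using 2 with N
  rw [Sproj_eq_fourierInv]
  refine congrArg (fun m : EuclideanSpace ℝ (Fin n) → ℂ => 𝓕⁻ m x) (funext fun ξ => ?_)
  rw [← zpow_natCast, ← neg_neg (N : ℤ), lowSymbol_zpow_smul, sub_eq_add_neg, neg_neg]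

lemma enorm_Sproj_le_tsum_enorm_Dproj [NeZero n] (hχ : IsLPCutoff χ) (k : ℤ)
    (f : 𝓢(EuclideanSpace ℝ (Fin n), ℂ)) (x : EuclideanSpace ℝ (Fin n)) :
    ‖Sproj χ k f x‖ₑ ≤ ∑' l : ℕ, ‖Dproj χ (k - 1 - l) f x‖ₑ := by
  have hstep (N : ℕ) :
      edist (Sproj χ (k - N) f x) (Sproj χ (k - (N + 1 : ℕ)) f x) = ‖Dproj χ (k - 1 - N) f x‖ₑ := by
    rw [edist_eq_enorm_sub, hχ.Dproj_eq_sub, Pi.sub_apply, sub_right_comm, sub_add_cancel,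
      Nat.cast_succ, sub_add_eq_sub_sub]
  simpa using edist_le_tsum_of_edist_le_of_tendsto₀ _ (fun N => (hstep N).le)
    (hχ.tendsto_Sproj_sub_natCast k f x)

lemma eLpNorm_Sproj_le_tsum_eLpNorm_Dproj [NeZero n] (hχ : IsLPCutoff χ) {p : ℝ≥0∞} (hp : 1 ≤ p)
    (k : ℤ) (f : 𝓢(EuclideanSpace ℝ (Fin n), ℂ)) :
    eLpNorm (Sproj χ k f) p volume ≤ ∑' l : ℕ, eLpNorm (Dproj χ (k - 1 - l) f) p volume := by
  have hmeas : Measurable (uncurry fun (x : EuclideanSpace ℝ (Fin n)) (l : ℕ) =>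
      ‖Dproj χ (k - 1 - l) f x‖ₑ) :=
    measurable_from_prod_countable_left fun l =>
      (hχ.continuous_Dproj (k - 1 - l) f).enorm.measurable
  refine (eLpNorm_mono_enorm (g := fun x => ∑' l : ℕ, ‖Dproj χ (k - 1 - l) f x‖ₑ)
    (hχ.enorm_Sproj_le_tsum_enorm_Dproj k f)).trans ?_
  simpa only [lintegral_count] using
    eLpNorm_lintegral_le (ν := .count) hp hmeas measurable_from_top fun l => (eLpNorm_enorm _).le

end IsLPCutoff

end LittlewoodPaley

section Paraproduct

open SchwartzMap hiding convolution
open scoped Pointwise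

variable {n : ℕ} {χ : EuclideanSpace ℝ (Fin n) → ℝ}

/-- The term `Δ_k f₁ · S_{k-1} f₂` of the para-product series, as a Schwartz function; it is given
by Fourier multipliers, since `Dproj` and `Sproj` return plain functions. -/
def paraproductTerm (χ : EuclideanSpace ℝ (Fin n) → ℝ) (f₁ f₂ : 𝓢(EuclideanSpace ℝ (Fin n), ℂ))
    (k : ℤ) : 𝓢(EuclideanSpace ℝ (Fin n), ℂ) :=
  pairing (ContinuousLinearMap.mul ℂ ℂ) (fourierMultiplierCLM ℂ (blockSymbol χ k) f₁)
    (fourierMultiplierCLM ℂ (lowSymbol χ (k - 1)) f₂)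

/-- The para-product `T_{f₂} f₁`, summed pointwise. -/
def paraproduct (χ : EuclideanSpace ℝ (Fin n) → ℝ) (f₁ f₂ : EuclideanSpace ℝ (Fin n) → ℂ)
    (x : EuclideanSpace ℝ (Fin n)) : ℂ :=
  ∑' k : ℤ, Dproj χ k f₁ x * Sproj χ (k - 1) f₂ x

namespace IsLPCutoff

lemma paraproductTerm_apply (hχ : IsLPCutoff χ) (f₁ f₂ : 𝓢(EuclideanSpace ℝ (Fin n), ℂ)) (k : ℤ)
    (x : EuclideanSpace ℝ (Fin n)) :
    paraproductTerm χ f₁ f₂ k x = Dproj χ k f₁ x * Sproj χ (k - 1) f₂ x := by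
  rw [hχ.Dproj_eq_fourierMultiplierCLM, hχ.Sproj_eq_fourierMultiplierCLM]
  rfl

lemma paraproduct_eq_tsum_paraproductTerm (hχ : IsLPCutoff χ)
    (f₁ f₂ : 𝓢(EuclideanSpace ℝ (Fin n), ℂ)) :
    paraproduct χ f₁ f₂ = fun x => ∑' k : ℤ, paraproductTerm χ f₁ f₂ k x := by
  simp only [hχ.paraproductTerm_apply]
  rfl

lemma support_fourier_paraproductTerm_subset (hχ : IsLPCutoff χ)
    (f₁ f₂ : 𝓢(EuclideanSpace ℝ (Fin n), ℂ)) (k : ℤ) :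
    support (𝓕 ⇑(paraproductTerm χ f₁ f₂ k)) ⊆
      {ξ | ‖ξ‖ ∈ Set.Ioc (1 / 12 * 2 ^ k) (10 / 3 * 2 ^ k)} := fun ξ hξ => by
  obtain ⟨η, hη, ζ, hζ, rfl⟩ := Set.mem_add.1 (support_fourier_pairing_subset _ _ _ hξ)
  rw [← hχ.Dproj_eq_fourierMultiplierCLM] at hη
  rw [← hχ.Sproj_eq_fourierMultiplierCLM] at hζ
  obtain ⟨hη_lt, hη_le⟩ := hχ.support_fourier_Dproj_subset k f₁ hη
  have hζ_le : ‖ζ‖ ≤ 2 / 3 * 2 ^ k := (hχ.support_fourier_Sproj_subset (k - 1) f₂ hζ).trans_eq <| by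
    rw [zpow_sub_one₀ two_ne_zero]
    ring
  constructor
  · linarith [norm_sub_le_norm_add η ζ]
  · linarith [norm_add_le η ζ]

lemma blockSymbol_smul_fourier_paraproductTerm_eq_zero (hχ : IsLPCutoff χ)
    (f₁ f₂ : 𝓢(EuclideanSpace ℝ (Fin n), ℂ)) {j k : ℤ} (hjk : k - j ∉ Finset.Icc (-2) 4)
    (ξ : EuclideanSpace ℝ (Fin n)) :
    blockSymbol χ j ξ • 𝓕 ⇑(paraproductTerm χ f₁ f₂ k) ξ = 0 := by
  contrapose! hjk
  obtain ⟨hj_lt, hj_le⟩ := hχ.norm_mem_Ioc_of_blockSymbol_ne_zero (left_ne_zero_of_smul hjk)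
  obtain ⟨hk_lt, hk_le⟩ :=
    hχ.support_fourier_paraproductTerm_subset f₁ f₂ k (right_ne_zero_of_smul hjk)
  have hub : k < j + 5 := lt_add_of_mul_zpow_lt one_lt_two (by norm_num)
    (by norm_num) (hk_lt.trans_le hj_le)
  have hlb : j < k + 3 := lt_add_of_mul_zpow_lt one_lt_two (by norm_num)
    (by norm_num) (hj_lt.trans_le hk_le)
  exact Finset.mem_Icc.2 ⟨by omega, by omega⟩

lemma tsum_lintegral_enorm_paraproductTerm_lt_top (hχ : IsLPCutoff χ)
    (f₁ f₂ : 𝓢(EuclideanSpace ℝ (Fin n), ℂ)) :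
    ∑' k : ℤ, ∫⁻ x, ‖paraproductTerm χ f₁ f₂ k x‖ₑ < ∞ := by
  set M := eLpNorm (𝓕⁻ (lowSymbol χ 0)) 1 volume * eLpNorm f₂ 1 volume
  have hM : M < ∞ :=
    ENNReal.mul_lt_top (hχ.eLpNorm_fourierInv_lowSymbol_lt_top 0 1) (f₂.memLp 1 volume).2
  have hterm (k : ℤ) :
      ∫⁻ x, ‖paraproductTerm χ f₁ f₂ k x‖ₑ ≤ (⨆ x, ‖Dproj χ k f₁ x‖ₑ) * M := by
    calc ∫⁻ x, ‖paraproductTerm χ f₁ f₂ k x‖ₑ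
        ≤ ∫⁻ x, (⨆ y, ‖Dproj χ k f₁ y‖ₑ) * ‖Sproj χ (k - 1) f₂ x‖ₑ := by
          gcongr with x
          rw [hχ.paraproductTerm_apply, enorm_mul]
          gcongr
          exact le_iSup (fun y => ‖Dproj χ k f₁ y‖ₑ) x
      _ = (⨆ y, ‖Dproj χ k f₁ y‖ₑ) * eLpNorm (Sproj χ (k - 1) f₂) 1 volume := by
          rw [lintegral_const_mul _ (hχ.continuous_Sproj _ f₂).enorm.measurable,
            eLpNorm_one_eq_lintegral_enorm]
      _ ≤ (⨆ y, ‖Dproj χ k f₁ y‖ₑ) * M := by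
          gcongr
          exact hχ.eLpNorm_Sproj_le le_rfl (k - 1) f₂
  refine (ENNReal.tsum_le_tsum hterm).trans_lt ?_
  rw [ENNReal.tsum_mul_right]
  exact ENNReal.mul_lt_top (hχ.tsum_iSup_enorm_Dproj_lt_top f₁) hM

lemma summable_Dproj_mul_Sproj (hχ : IsLPCutoff χ) (f₁ f₂ : 𝓢(EuclideanSpace ℝ (Fin n), ℂ))
    (x : EuclideanSpace ℝ (Fin n)) :
    Summable fun k : ℤ => Dproj χ k f₁ x * Sproj χ (k - 1) f₂ x := by
  refine Summable.of_enorm (ne_of_lt ?_)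
  calc ∑' k : ℤ, ‖Dproj χ k f₁ x * Sproj χ (k - 1) f₂ x‖ₑ
      ≤ ∑' k : ℤ, (⨆ y, ‖Dproj χ k f₁ y‖ₑ) *
          ∫⁻ ξ, ‖𝓕 (f₂ : EuclideanSpace ℝ (Fin n) → ℂ) ξ‖ₑ := by
        gcongr with k
        rw [enorm_mul]
        gcongr
        · exact le_iSup (fun y => ‖Dproj χ k f₁ y‖ₑ) x
        · exact hχ.enorm_Sproj_le (k - 1) f₂ x
    _ < ∞ := by
        rw [ENNReal.tsum_mul_right]
        exact ENNReal.mul_lt_top (hχ.tsum_iSup_enorm_Dproj_lt_top f₁)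
          (𝓕 f₂).integrable.hasFiniteIntegral

lemma summable_integral_Dproj_mul_Sproj_mul (hχ : IsLPCutoff χ)
    (f₁ f₂ g : 𝓢(EuclideanSpace ℝ (Fin n), ℂ)) :
    Summable fun k : ℤ => ∫ x, Dproj χ k f₁ x * Sproj χ (k - 1) f₂ x * g x := by
  simp only [← hχ.paraproductTerm_apply]
  refine Summable.of_enorm (ne_of_lt ?_)
  calc ∑' k : ℤ, ‖∫ x, paraproductTerm χ f₁ f₂ k x * g x‖ₑ
      ≤ ∑' k : ℤ, (∫⁻ x, ‖paraproductTerm χ f₁ f₂ k x‖ₑ) * eLpNorm g ∞ volume := by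
        gcongr with k
        rw [← lintegral_mul_const _ (SchwartzMap.continuous _).enorm.measurable]
        refine (enorm_integral_le_lintegral_enorm _).trans (lintegral_mono_ae ?_)
        filter_upwards [ae_le_eLpNormEssSup (f := g) (μ := volume)] with x hx
        rw [enorm_mul]
        exact mul_le_mul_right hx _
    _ < ∞ := by
        rw [ENNReal.tsum_mul_right]
        exact ENNReal.mul_lt_top (hχ.tsum_lintegral_enorm_paraproductTerm_lt_top f₁ f₂)
          (g.memLp ∞ volume).2

lemma Dproj_paraproduct (hχ : IsLPCutoff χ) (f₁ f₂ : 𝓢(EuclideanSpace ℝ (Fin n), ℂ)) (j : ℤ) :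
    Dproj χ j (paraproduct χ f₁ f₂) =
      Dproj χ j ⇑(∑ i ∈ Finset.Icc (-2) 4, paraproductTerm χ f₁ f₂ (j + i)) := by
  rw [Dproj_eq_fourierInv, Dproj_eq_fourierInv]
  congr 1
  ext ξ
  calc blockSymbol χ j ξ • 𝓕 (paraproduct χ f₁ f₂) ξ
      = ∑' k : ℤ, blockSymbol χ j ξ • 𝓕 ⇑(paraproductTerm χ f₁ f₂ k) ξ := by
        rw [hχ.paraproduct_eq_tsum_paraproductTerm, fourier_tsum
          (fun k => (paraproductTerm χ f₁ f₂ k).continuous.aestronglyMeasurable)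
          (hχ.tsum_lintegral_enorm_paraproductTerm_lt_top f₁ f₂).ne, tsum_const_smul'']
    _ = ∑' i : ℤ, blockSymbol χ j ξ • 𝓕 ⇑(paraproductTerm χ f₁ f₂ (j + i)) ξ :=
        ((Equiv.addLeft j).tsum_eq _).symm
    _ = ∑ i ∈ Finset.Icc (-2) 4, blockSymbol χ j ξ • 𝓕 ⇑(paraproductTerm χ f₁ f₂ (j + i)) ξ :=
        tsum_eq_sum fun i hi =>
          hχ.blockSymbol_smul_fourier_paraproductTerm_eq_zero f₁ f₂ (by simpa using hi) ξ
    _ = blockSymbol χ j ξ • 𝓕 ⇑(∑ i ∈ Finset.Icc (-2) 4, paraproductTerm χ f₁ f₂ (j + i)) ξ := by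
        rw [← Finset.smul_sum, ← fourier_coe, FourierTransform.fourier_sum, sum_apply]
        simp only [fourier_coe]

lemma eLpNorm_Dproj_paraproduct_le (hχ : IsLPCutoff χ) {p : ℝ≥0∞} (hp : 1 ≤ p) (p₁ p₂ : ℝ≥0∞)
    [ENNReal.HolderTriple p₁ p₂ p] (f₁ f₂ : 𝓢(EuclideanSpace ℝ (Fin n), ℂ)) (j : ℤ) :
    eLpNorm (Dproj χ j (paraproduct χ f₁ f₂)) p volume ≤
      eLpNorm (𝓕⁻ (blockSymbol χ 0)) 1 volume * ∑ i ∈ Finset.Icc (-2 : ℤ) 4,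
        eLpNorm (Dproj χ (j + i) f₁) p₁ volume * eLpNorm (Sproj χ (j + i - 1) f₂) p₂ volume := by
  rw [hχ.Dproj_paraproduct]
  refine (hχ.eLpNorm_Dproj_le hp j _).trans (mul_le_mul_right ?_ _)
  rw [FunLike.coe_sum]
  refine (eLpNorm_sum_le (fun i _ => (SchwartzMap.continuous _).aestronglyMeasurable) hp).trans ?_
  gcongr with i
  have hterm : ⇑(paraproductTerm χ f₁ f₂ (j + i)) = Dproj χ (j + i) f₁ • Sproj χ (j + i - 1) f₂ :=
    funext (hχ.paraproductTerm_apply f₁ f₂ (j + i))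
  rw [hterm]
  exact eLpNorm_smul_le_mul_eLpNorm (hχ.continuous_Sproj _ f₂).aestronglyMeasurable
    (hχ.continuous_Dproj _ f₁).aestronglyMeasurable

lemma eLpNorm_count_Sproj_le [NeZero n] (hχ : IsLPCutoff χ) {p q : ℝ≥0∞} (hp : 1 ≤ p)
    (hq : 1 ≤ q) (α : ℝ) (f : 𝓢(EuclideanSpace ℝ (Fin n), ℂ)) :
    eLpNorm (fun k : ℤ => 2 ^ (k * -α) * eLpNorm (Sproj χ (k - 1) f) p volume) q .count ≤
      (∑' l : ℕ, 2 ^ (-(l + 2) * α)) * besovNorm χ (-α) p q f := by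
  rw [besovNorm, lqNorm_eq_eLpNorm_count (zero_lt_one.trans_le hq).ne']
  refine le_trans (eLpNorm_mono_enorm fun k => ?_) <| eLpNorm_count_tsum_mul_comp_add_le hq
    (fun l : ℕ => (2 : ℝ≥0∞) ^ (-(l + 2) * α)) (fun l => -2 - l)
    fun k => 2 ^ (k * -α) * eLpNorm (Dproj χ k f) p volume
  simp only [enorm_eq_self]
  refine (mul_le_mul_right (hχ.eLpNorm_Sproj_le_tsum_eLpNorm_Dproj hp (k - 1) f) _).trans_eq ?_
  rw [← ENNReal.tsum_mul_left]
  refine tsum_congr fun l => ?_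
  rw [← mul_assoc, ← ENNReal.rpow_add _ _ two_ne_zero ENNReal.ofNat_ne_top,
    show k - 1 - 1 - (l : ℤ) = k + (-2 - l) by ring]
  congr 2
  push_cast
  ring

lemma two_rpow_mul_eLpNorm_Dproj_paraproduct_le (hχ : IsLPCutoff χ) {p : ℝ≥0∞} (hp : 1 ≤ p)
    (p₁ p₂ : ℝ≥0∞) [ENNReal.HolderTriple p₁ p₂ p] (s α : ℝ)
    (f₁ f₂ : 𝓢(EuclideanSpace ℝ (Fin n), ℂ)) (j : ℤ) :
    2 ^ (j * s) * eLpNorm (Dproj χ j (paraproduct χ f₁ f₂)) p volume ≤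
      eLpNorm (𝓕⁻ (blockSymbol χ 0)) 1 volume * ∑ i ∈ Finset.Icc (-2 : ℤ) 4, 2 ^ (-i * s) *
        (2 ^ ((j + i : ℤ) * (s + α)) * eLpNorm (Dproj χ (j + i) f₁) p₁ volume *
          (2 ^ ((j + i : ℤ) * -α) * eLpNorm (Sproj χ (j + i - 1) f₂) p₂ volume)) := by
  refine (mul_le_mul_right (hχ.eLpNorm_Dproj_paraproduct_le hp p₁ p₂ f₁ f₂ j) _).trans_eq ?_
  rw [mul_left_comm, Finset.mul_sum]
  congr 1
  refine Finset.sum_congr rfl fun i _ => ?_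
  have hweight : (2 : ℝ≥0∞) ^ (j * s) =
      2 ^ (-i * s) * 2 ^ ((j + i : ℤ) * (s + α)) * 2 ^ ((j + i : ℤ) * -α) := by
    rw [← ENNReal.rpow_add _ _ two_ne_zero ENNReal.ofNat_ne_top,
      ← ENNReal.rpow_add _ _ two_ne_zero ENNReal.ofNat_ne_top]
    congr 1
    push_cast
    ring
  rw [hweight]
  ring

theorem besovNorm_paraproduct_le [NeZero n] (hχ : IsLPCutoff χ) {p q p₁ p₂ q₁ q₂ : ℝ≥0∞}
    [ENNReal.HolderTriple p₁ p₂ p] [ENNReal.HolderTriple q₁ q₂ q] (hp : 1 ≤ p) (hq : 1 ≤ q)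
    (s α : ℝ) (f₁ f₂ : 𝓢(EuclideanSpace ℝ (Fin n), ℂ)) :
    besovNorm χ s p q (paraproduct χ f₁ f₂) ≤
      eLpNorm (𝓕⁻ (blockSymbol χ 0)) 1 volume * (∑ i ∈ Finset.Icc (-2 : ℤ) 4, 2 ^ (-i * s)) *
        (∑' l : ℕ, 2 ^ (-(l + 2) * α)) *
        (besovNorm χ (s + α) p₁ q₁ f₁ * besovNorm χ (-α) p₂ q₂ f₂) := by
  have hp₂ : 1 ≤ p₂ := hp.trans (ENNReal.HolderTriple.symm (p := p₁) (q := p₂) (r := p)).le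
  have hq₁ : 1 ≤ q₁ := hq.trans (ENNReal.HolderTriple.le q₁ q₂ q)
  have hq₂ : 1 ≤ q₂ := hq.trans (ENNReal.HolderTriple.symm (p := q₁) (q := q₂) (r := q)).le
  set K := eLpNorm (𝓕⁻ (blockSymbol χ 0)) 1 volume
  set A : ℝ≥0∞ := ∑' l : ℕ, 2 ^ (-(l + 2) * α)
  set P : ℝ≥0∞ := ∑ i ∈ Finset.Icc (-2 : ℤ) 4, 2 ^ (-i * s) with hP
  let a (k : ℤ) : ℝ≥0∞ := 2 ^ (k * (s + α)) * eLpNorm (Dproj χ k f₁) p₁ volume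
  let b (k : ℤ) : ℝ≥0∞ := 2 ^ (k * -α) * eLpNorm (Sproj χ (k - 1) f₂) p₂ volume
  calc besovNorm χ s p q (paraproduct χ f₁ f₂)
      ≤ K * eLpNorm (fun j => ∑ i ∈ Finset.Icc (-2 : ℤ) 4, 2 ^ (-i * s) * (a (j + i) * b (j + i)))
          q .count := by
        rw [besovNorm, lqNorm_eq_eLpNorm_count (zero_lt_one.trans_le hq).ne']
        exact eLpNorm_le_mul_eLpNorm_of_ae_le_mul'' q .of_discrete <| ae_of_all _ fun j =>
          hχ.two_rpow_mul_eLpNorm_Dproj_paraproduct_le hp p₁ p₂ s α f₁ f₂ j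
    _ ≤ K * (P * eLpNorm (fun k => a k * b k) q .count) := by
        gcongr
        simp only [hP, ← Finset.tsum_subtype (Finset.Icc (-2 : ℤ) 4)]
        exact eLpNorm_count_tsum_mul_comp_add_le hq
          (fun i : Finset.Icc (-2 : ℤ) 4 => 2 ^ (-i * s)) (fun i => i) fun k => a k * b k
    _ ≤ K * (P * (eLpNorm a q₁ .count * eLpNorm b q₂ .count)) := by
        gcongr
        exact eLpNorm_mul_le .of_discrete .of_discrete q₁ q₂ q
    _ ≤ K * (P * (besovNorm χ (s + α) p₁ q₁ f₁ * (A * besovNorm χ (-α) p₂ q₂ f₂))) := by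
        rw [besovNorm, lqNorm_eq_eLpNorm_count (zero_lt_one.trans_le hq₁).ne']
        gcongr
        exact hχ.eLpNorm_count_Sproj_le hp₂ hq₂ α f₂
    _ = K * P * A * (besovNorm χ (s + α) p₁ q₁ f₁ * besovNorm χ (-α) p₂ q₂ f₂) := by ring

end IsLPCutoff

end Paraproduct

theorem paraproduct_estimate_general
    (n : ℕ) (hn : 1 ≤ n) (χ : EuclideanSpace ℝ (Fin n) → ℝ) (hχ : IsLPCutoff χ)
    (s α : ℝ) (hα : 0 < α) (p q p₁ p₂ q₁ q₂ : ℝ≥0∞) (hp : 1 ≤ p) (hq : 1 ≤ q)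
    (hp12 : 1 / p = 1 / p₁ + 1 / p₂) (hq12 : 1 / q = 1 / q₁ + 1 / q₂) :
    ∃ C : ℝ≥0∞, 0 < C ∧ C < ∞ ∧
      ∀ f₁ f₂ : 𝓢(EuclideanSpace ℝ (Fin n), ℂ),
        (∀ x, Summable fun k : ℤ => Dproj χ k (⇑f₁) x * Sproj χ (k - 1) (⇑f₂) x) ∧
        (∀ g : 𝓢(EuclideanSpace ℝ (Fin n), ℂ),
          Summable fun k : ℤ => ∫ x, Dproj χ k (⇑f₁) x * Sproj χ (k - 1) (⇑f₂) x * g x) ∧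
        besovNorm χ s p q (fun x => ∑' k : ℤ, Dproj χ k (⇑f₁) x * Sproj χ (k - 1) (⇑f₂) x) ≤
          C * (besovNorm χ (s + α) p₁ q₁ ⇑f₁ * besovNorm χ (-α) p₂ q₂ ⇑f₂) := by
  have : NeZero n := ⟨by omega⟩
  have : ENNReal.HolderTriple p₁ p₂ p := ⟨by simpa using hp12.symm⟩
  have : ENNReal.HolderTriple q₁ q₂ q := ⟨by simpa using hq12.symm⟩
  set K := eLpNorm (𝓕⁻ (blockSymbol χ 0)) 1 volume
  set A : ℝ≥0∞ := ∑' l : ℕ, 2 ^ (-(l + 2) * α)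
  set P : ℝ≥0∞ := ∑ i ∈ Finset.Icc (-2 : ℤ) 4, 2 ^ (-i * s)
  have hK : K < ∞ := hχ.eLpNorm_fourierInv_blockSymbol_lt_top 0 1
  have hA : A < ∞ := tsum_rpow_neg_add_mul_lt_top ENNReal.one_lt_two ENNReal.ofNat_ne_top hα 2
  have hP : P < ∞ := ENNReal.sum_lt_top.2 fun i _ =>
    (ENNReal.rpow_ne_top_of_ne_zero two_ne_zero ENNReal.ofNat_ne_top).lt_top
  refine ⟨K * P * A + 1, by positivity, by finiteness, fun f₁ f₂ =>
    ⟨hχ.summable_Dproj_mul_Sproj f₁ f₂, hχ.summable_integral_Dproj_mul_Sproj_mul f₁ f₂, ?_⟩⟩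
  exact (hχ.besovNorm_paraproduct_le hp hq s α f₁ f₂).trans (mul_le_mul_left le_self_add _)

/-- **Para-product estimate** `‖T_{f₂} f₁‖_{Ḃ^s_{p,q}} ≤ C ‖f₁‖_{Ḃ^{s+α}_{p₁,q₁}}
‖f₂‖_{Ḃ^{-α}_{p₂,q₂}}`: the series `T_{f₂} f₁ = Σ_{k∈ℤ} (Δ_k f₁)(S_{k-1} f₂)` converges
in the space of tempered distributions (pointwise, and when paired against any Schwartz
test function), and its sum obeys the stated Besov bound; the constant `C` depends only
on `n`, `χ`, `s`, `α` and the indices. -/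
theorem paraproduct_estimate
    (n : ℕ) (hn : 1 ≤ n) (χ : EuclideanSpace ℝ (Fin n) → ℝ) (hχ : IsLPCutoff χ)
    (s α : ℝ) (hs : 0 < s) (hα : 0 < α)
    (p q p₁ p₂ q₁ q₂ : ℝ≥0∞)
    (hp : 1 ≤ p) (hq : 1 ≤ q) (hp₁ : 1 ≤ p₁) (hp₂ : 1 ≤ p₂) (hq₁ : 1 ≤ q₁) (hq₂ : 1 ≤ q₂)
    (hp12 : 1 / p = 1 / p₁ + 1 / p₂) (hq12 : 1 / q = 1 / q₁ + 1 / q₂) :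
    ∃ C : ℝ≥0∞, 0 < C ∧ C < ∞ ∧
      ∀ f₁ f₂ : 𝓢(EuclideanSpace ℝ (Fin n), ℂ),
        (∀ x, Summable fun k : ℤ => Dproj χ k (⇑f₁) x * Sproj χ (k - 1) (⇑f₂) x) ∧
        (∀ g : 𝓢(EuclideanSpace ℝ (Fin n), ℂ),
          Summable fun k : ℤ => ∫ x, Dproj χ k (⇑f₁) x * Sproj χ (k - 1) (⇑f₂) x * g x) ∧
        besovNorm χ s p q (fun x => ∑' k : ℤ, Dproj χ k (⇑f₁) x * Sproj χ (k - 1) (⇑f₂) x) ≤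
          C * (besovNorm χ (s + α) p₁ q₁ ⇑f₁ * besovNorm χ (-α) p₂ q₂ ⇑f₂) :=
  paraproduct_estimate_general n hn χ hχ s α hα p q p₁ p₂ q₁ q₂ hp hq hp12 hq12
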